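/- There exists δ_0 > 0 such that for every (x̂, n) ∈ 𝒢̂ and every 1 ≤ j ≤ n, the inverse branch of g^j that sends g^n(x̂) to g^{n−j}(x̂) is defined on the ball B(g^n(x̂), δ_0) and is a θ_α^j-contraction there, i.e. it is Lipschitz with constant θ_α^j on B(g^n(x̂), δ_0). -/

import Mathlib

/-- The set `Ω_ρ = ⋃_{x ∈ Ω} B_ρ(x)`. -/
def Omr {N : Type*} [MetricSpace N] (Ω : Set N) (ρ : ℝ) : Set N :=
  ⋃ x ∈ Ω, Metric.ball x ρ

/-- The collection of good orbit segments: `(x̂,n)` is good if `n = 0` or for every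
`j ∈ {1,…,n}` the average of `χ_A` along the last `j` iterates is `< α`. -/
def goodSeg {X : Type*} (f : X → X) (A : Set X) (α : ℝ) : Set (X × ℕ) :=
  {p | p.2 = 0 ∨ ∀ j : ℕ, 1 ≤ j → j ≤ p.2 →
    (1 / (j : ℝ)) * ∑ i ∈ Finset.Ico (p.2 - j) p.2,
      Set.indicator A (fun _ => (1 : ℝ)) (f^[i] p.1) < α}

/-!
Write `θ_t = L ^ t * λ_u ^ (1 - t)`. By compactness the one-step inverse branches live on balls of a
uniform radius `δ₀`, and a point `x` has one that is Lipschitz with constant `θ_{χ(x)}`, `χ` being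
the characteristic function of `Ω_ρ`: the `ρ`-margin absorbs the distance from `x` to the point
whose neighbourhood provides the branch. Composing along an orbit segment multiplies the constants,
and `∏ θ_{t_i}` over `n` indices is the `n`-th power of `θ` at the average of the `t_i`. Since every
terminal piece of a good segment is good and `θ_α ≤ 1`, all intermediate compositions contract, so
each partial branch maps the `δ₀`-ball into the `δ₀`-ball on which the next branch is defined.
-/

open Filter Metric Set Topology

/-- `h` is an inverse branch of `f` on the ball `B(f x, δ)` that sends `f x` back to `x` and is
Lipschitz with constant `K` there. A branch is encoded as a total function whose values outside the
ball are irrelevant. -/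
structure IsLipschitzInvBranch {X Y : Type*} [PseudoMetricSpace X] [PseudoMetricSpace Y]
    (f : X → Y) (h : Y → X) (x : X) (δ K : ℝ) : Prop where
  apply_apply : h (f x) = x
  rightInvOn : RightInvOn h f (ball (f x) δ)
  dist_le : ∀ y ∈ ball (f x) δ, ∀ z ∈ ball (f x) δ, dist (h y) (h z) ≤ K * dist y z

namespace IsLipschitzInvBranch

variable {X Y Z : Type*} [PseudoMetricSpace X] [PseudoMetricSpace Y] [PseudoMetricSpace Z]
  {f : X → Y} {h : Y → X} {x : X} {δ K K' : ℝ}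

lemma id (x : X) (δ : ℝ) : IsLipschitzInvBranch (id : X → X) id x δ 1 :=
  ⟨rfl, fun _ _ => rfl, fun _ _ _ _ => (one_mul _).ge⟩

lemma mono (hh : IsLipschitzInvBranch f h x δ K) (hK : K ≤ K') :
    IsLipschitzInvBranch f h x δ K' where
  apply_apply := hh.apply_apply
  rightInvOn := hh.rightInvOn
  dist_le y hy z hz := (hh.dist_le y hy z hz).trans (by gcongr)

lemma mapsTo_ball (hh : IsLipschitzInvBranch f h x δ K) (hK : K ≤ 1) :
    MapsTo h (ball (f x) δ) (ball x δ) := fun y hy =>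
  calc dist (h y) x = dist (h y) (h (f x)) := by rw [hh.apply_apply]
    _ ≤ 1 * dist y (f x) :=
        (hh.mono hK).dist_le y hy _ (mem_ball_self (pos_of_mem_ball hy))
    _ < δ := by rwa [one_mul]

lemma comp {g : Y → Z} {k : Z → Y} (hk : IsLipschitzInvBranch g k (f x) δ K')
    (hh : IsLipschitzInvBranch f h x δ K) (hK : 0 ≤ K) (hK' : K' ≤ 1) :
    IsLipschitzInvBranch (g ∘ f) (h ∘ k) x δ (K' * K) where
  apply_apply := by simp only [Function.comp_apply, hk.apply_apply, hh.apply_apply]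
  rightInvOn := hh.rightInvOn.comp hk.rightInvOn (hk.mapsTo_ball hK')
  dist_le y hy z hz :=
    calc dist (h (k y)) (h (k z))
        ≤ K * dist (k y) (k z) :=
          hh.dist_le _ (hk.mapsTo_ball hK' hy) _ (hk.mapsTo_ball hK' hz)
      _ ≤ K * (K' * dist y z) := by gcongr; exact hk.dist_le y hy z hz
      _ = K' * K * dist y z := by ring

lemma exists_iterate {g : X → X} {c : X → ℝ} (hc : ∀ x, 0 ≤ c x)
    (hg : ∀ x, ∃ h, IsLipschitzInvBranch g h x δ (c x)) (n : ℕ) (x : X)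
    (hprod : ∀ m ≤ n, ∏ i ∈ Finset.Ico m n, c (g^[i] x) ≤ 1) :
    ∃ h, IsLipschitzInvBranch g^[n] h x δ (∏ i ∈ Finset.range n, c (g^[i] x)) := by
  induction n generalizing x with
  | zero => exact ⟨_, .id x δ⟩
  | succ n ih =>
    have hprod_tail : ∀ m ≤ n, ∏ i ∈ Finset.Ico m n, c (g^[i] (g x)) ≤ 1 := fun m hm =>
      calc ∏ i ∈ Finset.Ico m n, c (g^[i] (g x))
          = ∏ i ∈ Finset.Ico (m + 1) (n + 1), c (g^[i] x) :=
            Finset.prod_Ico_add' (fun i => c (g^[i] x)) m n 1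
        _ ≤ 1 := hprod (m + 1) (by lia)
    obtain ⟨k, hk⟩ := ih (g x) hprod_tail
    obtain ⟨h, hh⟩ := hg x
    rw [Finset.prod_range_succ']
    refine ⟨h ∘ k, hk.comp hh (hc x) ?_⟩
    rw [Finset.range_eq_Ico]
    exact hprod_tail 0 n.zero_le

end IsLipschitzInvBranch

section UniformRadius

variable {X Y : Type*} [MetricSpace X] [PseudoMetricSpace Y]

lemma exists_isLipschitzInvBranch_of_ball_subset_image {f : X → Y} {U : Set X} {x : X} {δ K : ℝ}
    (hx : x ∈ U) (hball : ball (f x) δ ⊆ f '' U)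
    (hdist : ∀ y ∈ U, ∀ z ∈ U, dist y z ≤ K * dist (f y) (f z)) :
    ∃ h, IsLipschitzInvBranch f h x δ K := by
  have hinj : InjOn f U := fun y hy z hz hyz =>
    dist_le_zero.1 (by simpa only [hyz, dist_self, mul_zero] using hdist y hy z hz)
  have : Nonempty X := ⟨x⟩
  have hright : RightInvOn (Function.invFunOn f U) f (f '' U) := fun _ =>
    Function.invFunOn_eq
  refine ⟨Function.invFunOn f U, hinj.leftInvOn_invFunOn hx, hright.mono hball,
    fun y hy z hz => ?_⟩
  simpa only [hright (hball hy), hright (hball hz)] using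
    hdist _ (Function.invFunOn_mem (hball hy)) _ (Function.invFunOn_mem (hball hz))

lemma eventually_nhds_prod_ball_subset {s : Set Y} {y : Y} (hs : s ∈ 𝓝 y) :
    ∀ᶠ q : ℝ × Y in 𝓝 (0, y), ball q.2 q.1 ⊆ s := by
  obtain ⟨r, hr, hrs⟩ := Metric.mem_nhds_iff.1 hs
  filter_upwards [prod_mem_nhds (Iio_mem_nhds (half_pos hr)) (ball_mem_nhds y (half_pos hr))]
    with q ⟨hqr, hqy⟩
  refine (ball_subset_ball' ?_).trans hrs
  linarith [mem_Iio.1 hqr, mem_ball.1 hqy]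

lemma exists_uniform_isLipschitzInvBranch [CompactSpace X] {f : X → Y} (hf : Continuous f)
    {K c : X → ℝ} (hKc : ∀ p, ∀ᶠ x in 𝓝 p, K p ≤ c x)
    (hU : ∀ p, ∃ U ∈ 𝓝 p, f '' U ∈ 𝓝 (f p) ∧
      ∀ y ∈ U, ∀ z ∈ U, dist y z ≤ K p * dist (f y) (f z)) :
    ∃ δ, 0 < δ ∧ ∀ x, ∃ h, IsLipschitzInvBranch f h x δ (c x) := by
  have hlocal : ∀ p ∈ univ, ∀ᶠ q : ℝ × X in 𝓝 (0, p),
      ∃ h, IsLipschitzInvBranch f h q.2 q.1 (c q.2) := by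
    intro p _
    obtain ⟨U, hpU, hfU, hdist⟩ := hU p
    have hball : ∀ᶠ q : ℝ × X in 𝓝 (0, p), ball (f q.2) q.1 ⊆ f '' U :=
      ((continuous_id.prodMap hf).tendsto (0, p)).eventually (eventually_nhds_prod_ball_subset hfU)
    filter_upwards [hball, continuousAt_snd.eventually hpU, continuousAt_snd.eventually (hKc p)]
      with q hq hqU hKq
    obtain ⟨h, hh⟩ := exists_isLipschitzInvBranch_of_ball_subset_image hqU hq hdist
    exact ⟨h, hh.mono hKq⟩
  have huniform : ∀ᶠ δ : ℝ in 𝓝 0, ∀ x ∈ univ, ∃ h, IsLipschitzInvBranch f h x δ (c x) :=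
    isCompact_univ.eventually_forall_of_forall_eventually hlocal
  obtain ⟨δ, hδ, hbranch⟩ := huniform.exists_gt
  exact ⟨δ, hδ, fun x => hbranch x (mem_univ x)⟩

end UniformRadius

/-- The rate `θ_t = L ^ t * l ^ (1 - t)` of an orbit that meets the rate `L` with frequency `t` and
the rate `l` with frequency `1 - t`. -/
noncomputable def interpolatedRate (L l t : ℝ) : ℝ :=
  L ^ t * l ^ (1 - t)

section InterpolatedRate

variable {L l α : ℝ}

lemma interpolatedRate_one : interpolatedRate L l 1 = L := by
  simp [interpolatedRate]

lemma interpolatedRate_zero : interpolatedRate L l 0 = l := by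
  simp [interpolatedRate]

lemma interpolatedRate_eq_mul_rpow (hL : 0 ≤ L) (hl : 0 < l) (t : ℝ) :
    interpolatedRate L l t = l * (L / l) ^ t := by
  rw [interpolatedRate, Real.rpow_sub hl, Real.rpow_one, Real.div_rpow hL hl.le]
  ring

lemma interpolatedRate_pos (hL : 0 < L) (hl : 0 < l) (t : ℝ) : 0 < interpolatedRate L l t := by
  unfold interpolatedRate
  positivity

lemma interpolatedRate_mono (hl : 0 < l) (hlL : l ≤ L) : Monotone (interpolatedRate L l) := by
  intro s t hst
  simp only [interpolatedRate_eq_mul_rpow (hl.le.trans hlL) hl]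
  gcongr
  exact (one_le_div hl).2 hlL

lemma prod_interpolatedRate {ι : Type*} (hL : 0 < L) (hl : 0 < l) (s : Finset ι) (t : ι → ℝ) :
    ∏ i ∈ s, interpolatedRate L l (t i) = l ^ s.card * (L / l) ^ ∑ i ∈ s, t i := by
  simp only [interpolatedRate_eq_mul_rpow hL.le hl, Finset.prod_mul_distrib, Finset.prod_const,
    Real.rpow_sum_of_pos (div_pos hL hl)]

lemma prod_interpolatedRate_le_pow {ι : Type*} (hl : 0 < l) (hlL : l ≤ L) {s : Finset ι}
    {t : ι → ℝ} (ht : ∑ i ∈ s, t i ≤ s.card * α) :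
    ∏ i ∈ s, interpolatedRate L l (t i) ≤ interpolatedRate L l α ^ s.card :=
  have hL : 0 < L := hl.trans_le hlL
  calc ∏ i ∈ s, interpolatedRate L l (t i)
      = l ^ s.card * (L / l) ^ ∑ i ∈ s, t i := prod_interpolatedRate hL hl s t
    _ ≤ l ^ s.card * (L / l) ^ ∑ _i ∈ s, α := by
        gcongr ?_ * ?_ ^ (?_ : ℝ)
        · exact (one_le_div hl).2 hlL
        · simpa only [Finset.sum_const, nsmul_eq_mul] using ht
    _ = interpolatedRate L l α ^ s.card := by
        rw [← prod_interpolatedRate hL hl, Finset.prod_const]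

lemma interpolatedRate_lt_one (hl : l ∈ Ioo (0 : ℝ) 1) (hL : 1 < L)
    (hα : α < Real.log l / (Real.log l - Real.log L)) : interpolatedRate L l α < 1 := by
  have hlog_l : Real.log l < 0 := Real.log_neg hl.1 hl.2
  have hlog_L : 0 < Real.log L := Real.log_pos hL
  rw [lt_div_iff_of_neg (by linarith)] at hα
  rw [interpolatedRate, Real.rpow_def_of_pos (by linarith), Real.rpow_def_of_pos hl.1,
    ← Real.exp_add, Real.exp_lt_one_iff]
  linarith

end InterpolatedRate

section GoodSegments

variable {X : Type*} {f : X → X} {A : Set X} {α : ℝ} {x : X} {m n : ℕ}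

lemma iterate_mem_goodSeg (h : (x, m + n) ∈ goodSeg f A α) : (f^[m] x, n) ∈ goodSeg f A α := by
  rcases h with h | h
  · exact .inl (Nat.add_eq_zero_iff.1 h).2
  · refine .inr fun j hj hjn => ?_
    simp only [← Function.iterate_add_apply]
    rw [Finset.sum_Ico_add' (fun i => A.indicator (fun _ => (1 : ℝ)) (f^[i] x)),
      ← Nat.sub_add_comm hjn, add_comm n m]
    exact h j hj (by lia)

lemma sum_indicator_le_of_mem_goodSeg (h : (x, n) ∈ goodSeg f A α) (hmn : m ≤ n) :
    ∑ i ∈ Finset.Ico m n, A.indicator 1 (f^[i] x) ≤ (Finset.Ico m n).card * α := by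
  rcases hmn.eq_or_lt with rfl | hlt
  · simp
  · have hpos : 0 < n - m := Nat.sub_pos_of_lt hlt
    have hfreq := (h.resolve_left (Nat.ne_zero_of_lt hlt)) (n - m) hpos (n.sub_le m)
    rw [one_div, inv_mul_lt_iff₀ (by exact_mod_cast hpos), Nat.sub_sub_self hmn] at hfreq
    rw [Nat.card_Ico]
    exact hfreq.le

end GoodSegments

section Contraction

variable {N : Type*} [MetricSpace N] {Ω : Set N} {ρ L lamu α : ℝ} {g : N → N} {Lf : N → ℝ}

lemma eventually_le_interpolatedRate_indicator_Omr (hl : 0 < lamu) (hlL : lamu ≤ L)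
    (hΩ : ∀ x ∈ Ω, Lf x ≤ L) (hΩc : ∀ x ∉ Ω, Lf x ≤ lamu) (hρ : 0 < ρ) (p : N) :
    ∀ᶠ x in 𝓝 p, Lf p ≤ interpolatedRate L lamu ((Omr Ω ρ).indicator 1 x) := by
  filter_upwards [ball_mem_nhds p hρ] with x hx
  by_cases hp : p ∈ Ω
  · have hxΩ : x ∈ Omr Ω ρ := mem_biUnion hp hx
    simpa only [indicator_of_mem hxΩ, Pi.one_apply, interpolatedRate_one] using hΩ p hp
  · calc Lf p ≤ lamu := hΩc p hp
      _ = interpolatedRate L lamu 0 := interpolatedRate_zero.symm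
      _ ≤ _ := interpolatedRate_mono hl hlL (indicator_nonneg (fun _ _ => zero_le_one) x)

lemma exists_isLipschitzInvBranch_of_mem_goodSeg {A : Set N} {δ : ℝ} (hl : 0 < lamu)
    (hlL : lamu ≤ L) (hθ : interpolatedRate L lamu α ≤ 1)
    (hg : ∀ x, ∃ h, IsLipschitzInvBranch g h x δ (interpolatedRate L lamu (A.indicator 1 x)))
    {x : N} {n : ℕ} (hgood : (x, n) ∈ goodSeg g A α) :
    ∃ h, IsLipschitzInvBranch g^[n] h x δ (interpolatedRate L lamu α ^ n) := by
  have hpos : ∀ t, 0 < interpolatedRate L lamu t := interpolatedRate_pos (hl.trans_le hlL) hl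
  have hprod : ∀ m ≤ n, ∏ i ∈ Finset.Ico m n, interpolatedRate L lamu (A.indicator 1 (g^[i] x)) ≤
      interpolatedRate L lamu α ^ (Finset.Ico m n).card := fun m hm =>
    prod_interpolatedRate_le_pow hl hlL (sum_indicator_le_of_mem_goodSeg hgood hm)
  obtain ⟨h, hh⟩ := IsLipschitzInvBranch.exists_iterate (fun x => (hpos _).le) hg n x
    fun m hm => (hprod m hm).trans (pow_le_one₀ (hpos α).le hθ)
  refine ⟨h, hh.mono ?_⟩
  simpa only [Finset.range_eq_Ico, Nat.card_Ico, Nat.sub_zero] using hprod 0 n.zero_le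

theorem goodSeg_backward_contraction_general [CompactSpace N] (hg : Continuous g)
    (hbranch : ∀ x, ∃ U ∈ 𝓝 x, g '' U ∈ 𝓝 (g x) ∧
      ∀ y ∈ U, ∀ z ∈ U, dist y z ≤ Lf x * dist (g y) (g z))
    (hl : 0 < lamu) (hlL : lamu ≤ L) (hΩ : ∀ x ∈ Ω, Lf x ≤ L) (hΩc : ∀ x ∉ Ω, Lf x ≤ lamu)
    (hρ : 0 < ρ) (hθ : L ^ α * lamu ^ (1 - α) ≤ 1) :
    ∃ δ₀ : ℝ, 0 < δ₀ ∧ ∀ x : N, ∀ n : ℕ, (x, n) ∈ goodSeg g (Omr Ω ρ) α → ∀ j ≤ n,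
      ∃ invb : N → N,
        (∀ y ∈ ball (g^[n] x) δ₀, g^[j] (invb y) = y) ∧
        invb (g^[n] x) = g^[n - j] x ∧
        (∀ y ∈ ball (g^[n] x) δ₀, ∀ z ∈ ball (g^[n] x) δ₀,
          dist (invb y) (invb z) ≤ (L ^ α * lamu ^ (1 - α)) ^ j * dist y z) := by
  obtain ⟨δ, hδ, hone⟩ := exists_uniform_isLipschitzInvBranch hg
    (eventually_le_interpolatedRate_indicator_Omr hl hlL hΩ hΩc hρ) hbranch
  refine ⟨δ, hδ, fun x n hgood j hjn => ?_⟩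
  rw [← Nat.sub_add_cancel hjn] at hgood
  obtain ⟨h, hh⟩ := exists_isLipschitzInvBranch_of_mem_goodSeg hl hlL hθ hone
    (iterate_mem_goodSeg hgood)
  have hcenter : g^[j] (g^[n - j] x) = g^[n] x := by
    rw [← Function.iterate_add_apply, Nat.add_sub_cancel' hjn]
  obtain ⟨happly, hright, hdist⟩ := hh
  rw [hcenter] at happly hright hdist
  exact ⟨h, hright, happly, hdist⟩

end Contraction

/-- There exists `δ₀ > 0` such that for every good orbit segment
`(x̂,n) ∈ 𝒢̂` and every `1 ≤ j ≤ n`, the inverse branch of `g^j` sending `g^n(x̂)` to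
`g^{n-j}(x̂)` is defined on the ball `B(g^n(x̂), δ₀)` and is a `θ_α^j`-contraction there,
where `θ_α = L^α λ_u^{1-α}`. -/
theorem goodSeg_backward_contraction
    {N : Type*} [MetricSpace N] [CompactSpace N] [ConnectedSpace N]
    (g : N → N) (hg : Continuous g)
    (Lf : N → ℝ) (hLfpos : ∀ x, 0 < Lf x)
    (hbranch : ∀ x : N, ∃ U : Set N, IsOpen U ∧ x ∈ U ∧ Set.InjOn g U ∧
      IsOpen (g '' U) ∧ ∀ y ∈ U, ∀ z ∈ U, dist y z ≤ Lf x * dist (g y) (g z))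
    (hexact : ∀ U : Set N, IsOpen U → U.Nonempty → ∃ n : ℕ, g^[n] '' U = Set.univ)
    (lamu L : ℝ) (hlamu : lamu ∈ Set.Ioo (0 : ℝ) 1) (hL : 1 < L)
    (Ω : Set N) (hΩ : IsOpen Ω)
    (hH1a : ∀ x ∈ Ω, Lf x ≤ L) (hH1b : ∀ x ∉ Ω, Lf x < lamu)
    (P : Finset (Set N)) (hPcov : ⋃₀ (P : Set (Set N)) = Set.univ)
    (hPinj : ∀ U ∈ P, Set.InjOn g U)
    (ρ : ℝ) (hρ : 0 < ρ)
    (α : ℝ) (hα : α ∈ Set.Ioo (0 : ℝ) 1)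
    (hαlt : α < Real.log lamu / (Real.log lamu - Real.log L)) :
    ∃ δ₀ : ℝ, 0 < δ₀ ∧
      ∀ x : N, ∀ n : ℕ, (x, n) ∈ goodSeg g (Omr Ω ρ) α →
        ∀ j : ℕ, 1 ≤ j → j ≤ n →
          ∃ invb : N → N,
            (∀ y ∈ Metric.ball (g^[n] x) δ₀, g^[j] (invb y) = y) ∧
            invb (g^[n] x) = g^[n - j] x ∧
            (∀ y ∈ Metric.ball (g^[n] x) δ₀, ∀ z ∈ Metric.ball (g^[n] x) δ₀,
              dist (invb y) (invb z) ≤ (L ^ α * lamu ^ (1 - α)) ^ j * dist y z) := by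
  have hnhds : ∀ x, ∃ U ∈ 𝓝 x, g '' U ∈ 𝓝 (g x) ∧
      ∀ y ∈ U, ∀ z ∈ U, dist y z ≤ Lf x * dist (g y) (g z) := fun x =>
    let ⟨U, hU, hxU, _, hgU, hdist⟩ := hbranch x
    ⟨U, hU.mem_nhds hxU, hgU.mem_nhds (mem_image_of_mem g hxU), hdist⟩
  obtain ⟨δ, hδ, hinv⟩ := goodSeg_backward_contraction_general hg hnhds hlamu.1
    (hlamu.2.trans hL).le hH1a (fun x hx => (hH1b x hx).le) hρ
    (interpolatedRate_lt_one hlamu hL hαlt).le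
  exact ⟨δ, hδ, fun x n hgood j _ hjn => hinv x n hgood j hjn⟩
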